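/- arXiv:1211.4043 — 10 statements merged into one kernel-verified Lean document; each statement's English description precedes it below -/
import Mathlib

section
/- For every real number r > 0, the sum over k ≥ 1 of log(1 − e^{−2πrk}) minus the sum over k ≥ 1 of log(1 − e^{−2πk/r}) equals (1/2)·[(π/6)(r − 1/r) − log r]. Equivalently, log φ(e^{−2πr}) − log φ(e^{−2π/r}) = (1/2)[(π/6)(r − 1/r) − log r], where φ is the Euler function. -/
open Real

/-- The eta function on the imaginary axis. -/
lemma eta_imag_axis (r : ℝ) (hr : 0 < r) :
    ModularForm.eta (Complex.I * r) =
      ((Real.exp (-(π * r / 12) +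
        ∑' k : ℕ, Real.log (1 - Real.exp (-2 * π * r * (k + 1)))) : ℝ) : ℂ) := by
  have hpos : ∀ k : ℕ, 0 < 1 - Real.exp (-2 * π * r * (k + 1)) := by
    intro k
    have h : 0 < 2 * π * r * (k + 1) := by positivity
    have : Real.exp (-2 * π * r * (k + 1)) < 1 := by
      rw [Real.exp_lt_one_iff]
      linarith
    linarith
  have hs : Summable fun k : ℕ => Real.log (1 - Real.exp (-2 * π * r * (k + 1))) := by
    have h0 : Summable fun k : ℕ => -Real.exp (-2 * π * r * (k + 1)) := by
      have hlt : Real.exp (-2 * π * r) < 1 := by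
        rw [Real.exp_lt_one_iff]
        have : 0 < 2 * π * r := by positivity
        linarith
      have hg := (summable_nat_add_iff 1).mpr
        (summable_geometric_of_lt_one (Real.exp_pos _).le hlt)
      refine (hg.congr fun k => ?_).neg
      rw [← Real.exp_nat_mul]
      congr 1
      push_cast
      ring
    simpa [sub_eq_add_neg] using Real.summable_log_one_add_of_summable h0
  rw [Real.exp_add, Real.rexp_tsum_eq_tprod hpos hs, ModularForm.eta, Complex.ofReal_mul]
  have hm : ((∏' k : ℕ, (1 - Real.exp (-2 * π * r * (k + 1))) : ℝ) : ℂ) =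
      ∏' k : ℕ, ((1 - Real.exp (-2 * π * r * (k + 1)) : ℝ) : ℂ) :=
    (Real.multipliable_of_summable_log hpos hs).map_tprod Complex.ofRealHom
      Complex.continuous_ofReal
  rw [hm]
  congr 1
  · rw [Function.Periodic.qParam, Complex.ofReal_exp]
    congr 1
    push_cast
    linear_combination (2 * (π : ℂ) * r / 24) * Complex.I_sq
  · refine tprod_congr fun k => ?_
    rw [ModularForm.eta_q_eq_cexp]
    push_cast
    congr 2
    linear_combination (2 * (π : ℂ) * r * (k + 1)) * Complex.I_sq

lemma norm_csqrt_sq (z : ℂ) (hz : z ≠ 0) : ‖Complex.sqrt z‖ ^ 2 = ‖z‖ := by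
  rw [← norm_pow, _root_.sqrt_eq_exp hz, ← Complex.exp_nat_mul]
  congr 1
  rw [show ((2 : ℕ) : ℂ) * (Complex.log z / 2) = Complex.log z by push_cast; ring,
    Complex.exp_log hz]

/-- For every real `r > 0`,
`∑_{k≥1} log(1 − e^{−2πrk}) − ∑_{k≥1} log(1 − e^{−2πk/r})
  = (1/2)·[(π/6)(r − 1/r) − log r]`. -/
theorem euler_function_modular_identity (r : ℝ) (hr : 0 < r) :
    (∑' k : ℕ, Real.log (1 - Real.exp (-2 * π * r * (k + 1)))) -
      (∑' k : ℕ, Real.log (1 - Real.exp (-2 * π * (k + 1) / r))) =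
    (1 / 2) * ((π / 6) * (r - 1 / r) - Real.log r) := by
  have hrc : (r : ℂ) ≠ 0 := by exact_mod_cast hr.ne'
  have h1 := eta_imag_axis r hr
  have h2 := eta_imag_axis r⁻¹ (inv_pos.mpr hr)
  have hT := ModularForm.eta_comp_eq_csqrt_I_inv
    (show Complex.I * r ∈ UpperHalfPlane.upperHalfPlaneSet by
      simpa [UpperHalfPlane.upperHalfPlaneSet] using hr)
  have he : -1 / (Complex.I * r) = Complex.I * ((r⁻¹ : ℝ) : ℂ) := by
    push_cast
    field_simp
    simp
  simp only [Function.comp_apply, Pi.smul_apply, Pi.mul_apply, smul_eq_mul] at hT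
  rw [he, h1, h2] at hT
  have hN := congrArg (fun z => Real.log (‖z‖ ^ 2)) hT
  simp only [norm_mul, mul_pow, norm_inv, inv_pow] at hN
  rw [norm_csqrt_sq _ Complex.I_ne_zero,
    norm_csqrt_sq _ (mul_ne_zero Complex.I_ne_zero hrc)] at hN
  simp only [Complex.norm_real, Real.norm_eq_abs, Real.abs_exp, norm_mul, Complex.norm_I,
    abs_of_pos hr, inv_one, one_mul] at hN
  rw [Real.log_mul hr.ne' (by positivity), Real.log_pow, Real.log_pow, Real.log_exp,
    Real.log_exp] at hN
  have hc : (∑' k : ℕ, Real.log (1 - Real.exp (-2 * π * (k + 1) / r))) =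
      ∑' k : ℕ, Real.log (1 - Real.exp (-2 * π * r⁻¹ * (k + 1))) := by
    refine tsum_congr fun k => ?_
    congr 3
    ring
  rw [hc, one_div r]
  push_cast at hN
  linarith
end

section
/- Let u : ℝ → ℝ be continuously differentiable, Q : ℝ → ℝ continuous, and let S₊, S₋ : ℝ → ℝ be continuously differentiable functions both satisfying the Riccati equation S'(x) + S(x)² = Q(x) + u(x)²/4 + u'(x)/2 for all x, with S₊(a) ≠ S₋(a). Define φ(x) = exp(−(1/2)∫_a^x u(σ)dσ) · (exp(∫_a^x S₊(σ)dσ) − exp(∫_a^x S₋(σ)dσ)) / (S₊(a) − S₋(a)). Then φ is twice differentiable and satisfies φ''(x) + u(x)φ'(x) − Q(x)φ(x) = 0 for all x, together with the initial conditions φ(a) = 0 and φ'(a) = 1. -/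
theorem riccati_aux (a : ℝ) (u Q S : ℝ → ℝ)
    (hu : ContDiff ℝ 1 u) (hS : ContDiff ℝ 1 S)
    (hR : ∀ x, deriv S x + (S x) ^ 2 = Q x + (u x) ^ 2 / 4 + deriv u x / 2)
    (E : ℝ → ℝ)
    (hE : ∀ x, E x = Real.exp (-(1 / 2) * ∫ σ in a..x, u σ) * Real.exp (∫ σ in a..x, S σ)) :
    (∀ x, HasDerivAt E ((S x - u x / 2) * E x) x) ∧
    (∀ x, HasDerivAt (fun y => (S y - u y / 2) * E y)
      (Q x * E x - u x * ((S x - u x / 2) * E x)) x) := by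
  have h1 : ∀ x, HasDerivAt E ((S x - u x / 2) * E x) x := by
    intro x
    have hEf : E = fun x => Real.exp (-(1 / 2) * ∫ σ in a..x, u σ) *
        Real.exp (∫ σ in a..x, S σ) := funext hE
    have hU := (hu.continuous.integral_hasStrictDerivAt a x).hasDerivAt
    have hI := (hS.continuous.integral_hasStrictDerivAt a x).hasDerivAt
    have h := ((hU.const_mul (-(1 / 2))).exp).mul hI.exp
    rw [hEf]
    refine h.congr_deriv ?_
    ring
  refine ⟨h1, fun x => ?_⟩
  have hu' := (hu.differentiable one_ne_zero x).hasDerivAt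
  have hS' := (hS.differentiable one_ne_zero x).hasDerivAt
  have h := (hS'.sub (hu'.div_const 2)).mul (h1 x)
  refine h.congr_deriv ?_
  simp only [Pi.sub_apply]
  linear_combination E x * hR x

/-- If `S₊`, `S₋` are C¹ solutions of the Riccati equation `S' + S² = Q + u²/4 + u'/2`
with `S₊(a) ≠ S₋(a)`, then
`φ(x) = e^{−(1/2)∫_a^x u} (e^{∫_a^x S₊} − e^{∫_a^x S₋})/(S₊(a) − S₋(a))`
is twice differentiable, satisfies `φ'' + uφ' − Qφ = 0`, `φ(a) = 0` and `φ'(a) = 1`. -/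
theorem riccati_solutions_give_ivp_solution (a : ℝ) (u Q Sp Sm : ℝ → ℝ)
    (hu : ContDiff ℝ 1 u) (hQ : Continuous Q)
    (hSp : ContDiff ℝ 1 Sp) (hSm : ContDiff ℝ 1 Sm)
    (hRp : ∀ x, deriv Sp x + (Sp x) ^ 2 = Q x + (u x) ^ 2 / 4 + deriv u x / 2)
    (hRm : ∀ x, deriv Sm x + (Sm x) ^ 2 = Q x + (u x) ^ 2 / 4 + deriv u x / 2)
    (hne : Sp a ≠ Sm a)
    (φ : ℝ → ℝ)
    (hφ : ∀ x, φ x = Real.exp (-(1 / 2) * ∫ σ in a..x, u σ) *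
      (Real.exp (∫ σ in a..x, Sp σ) - Real.exp (∫ σ in a..x, Sm σ)) / (Sp a - Sm a)) :
    (Differentiable ℝ φ ∧ Differentiable ℝ (deriv φ)) ∧
      (∀ x, deriv (deriv φ) x + u x * deriv φ x - Q x * φ x = 0) ∧
      φ a = 0 ∧ deriv φ a = 1 := by
  have hd : Sp a - Sm a ≠ 0 := sub_ne_zero.mpr hne
  obtain ⟨P, hP⟩ : ∃ P : ℝ → ℝ, ∀ x, P x = Real.exp (-(1 / 2) * ∫ σ in a..x, u σ) *
    Real.exp (∫ σ in a..x, Sp σ) := ⟨_, fun _ => rfl⟩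
  obtain ⟨M, hM⟩ : ∃ M : ℝ → ℝ, ∀ x, M x = Real.exp (-(1 / 2) * ∫ σ in a..x, u σ) *
    Real.exp (∫ σ in a..x, Sm σ) := ⟨_, fun _ => rfl⟩
  obtain ⟨p1, p2⟩ := riccati_aux a u Q Sp hu hSp hRp P hP
  obtain ⟨m1, m2⟩ := riccati_aux a u Q Sm hu hSm hRm M hM
  have hφ' : φ = fun x => (P x - M x) / (Sp a - Sm a) := by
    funext x
    rw [hφ, hP, hM, mul_sub]
  have d1 : ∀ x, HasDerivAt φ
      (((Sp x - u x / 2) * P x - (Sm x - u x / 2) * M x) / (Sp a - Sm a)) x := by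
    intro x
    rw [hφ']
    exact ((p1 x).sub (m1 x)).div_const _
  have e1 : deriv φ = fun x =>
      ((Sp x - u x / 2) * P x - (Sm x - u x / 2) * M x) / (Sp a - Sm a) :=
    funext fun x => (d1 x).deriv
  have d2 : ∀ x, HasDerivAt (deriv φ)
      (((Q x * P x - u x * ((Sp x - u x / 2) * P x)) -
        (Q x * M x - u x * ((Sm x - u x / 2) * M x))) / (Sp a - Sm a)) x := by
    intro x
    rw [e1]
    exact ((p2 x).sub (m2 x)).div_const _
  have hPa : P a = 1 := by simp [hP]
  have hMa : M a = 1 := by simp [hM]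
  refine ⟨⟨fun x => (d1 x).differentiableAt, fun x => (d2 x).differentiableAt⟩, ?_, ?_, ?_⟩
  · intro x
    rw [(d2 x).deriv, (d1 x).deriv, hφ']
    ring
  · simp [hφ', hPa, hMa]
  · rw [(d1 a).deriv, hPa, hMa, div_eq_one_iff_eq hd]
    ring
end

section
/- Let u : ℝ → ℝ be continuously differentiable, Q : ℝ → ℝ continuous, and let S₁, S₂ : ℝ → ℝ be continuously differentiable with S₁(x) > 0 for all x, such that both S₊ = S₁ + S₂ and S₋ = −S₁ + S₂ satisfy the Riccati equation S'(x) + S(x)² = Q(x) + u(x)²/4 + u'(x)/2 for all x. Let φ be the solution of φ'' + uφ' − Qφ = 0 with φ(a) = 0, φ'(a) = 1. Then for any b ≥ a, φ(b) = exp(∫_a^b (S₁(x) − u(x)/2) dx) · (1 − exp(−2∫_a^b S₁(x)dx)) / (2√(S₁(a) S₁(b))). -/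
theorem linear_ode_aux (a : ℝ) (f g : ℝ → ℝ) (hg : Continuous g)
    (hf : ∀ x, HasDerivAt f (g x * f x) x) (b : ℝ) :
    f b = f a * Real.exp (∫ x in a..b, g x) := by
  have hG : ∀ x, HasDerivAt (fun y => ∫ t in a..y, g t) (g x) x := fun x =>
    intervalIntegral.integral_hasDerivAt_right (hg.intervalIntegrable _ _)
      hg.aestronglyMeasurable.stronglyMeasurableAtFilter hg.continuousAt
  have hH : ∀ x, HasDerivAt (fun y => f y * Real.exp (-∫ t in a..y, g t)) 0 x := by
    intro x
    have h := (hf x).mul ((hG x).neg.exp)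
    refine h.congr_deriv ?_
    simp only [Pi.neg_apply]
    ring
  have hc := is_const_of_deriv_eq_zero (fun x => (hH x).differentiableAt)
    (fun x => (hH x).deriv) b a
  simp only [intervalIntegral.integral_same, neg_zero, Real.exp_zero, mul_one] at hc
  rw [← hc, mul_assoc, ← Real.exp_add]
  simp

/-- If `S₁ + S₂` and `−S₁ + S₂` both satisfy the Riccati equation
`S' + S² = Q + u²/4 + u'/2`, with `S₁ > 0`, and `φ` solves `φ'' + uφ' − Qφ = 0`,
`φ(a) = 0`, `φ'(a) = 1`, then for `b ≥ a`,
`φ(b) = e^{∫_a^b (S₁ − u/2)} (1 − e^{−2∫_a^b S₁})/(2√(S₁(a)S₁(b)))`. -/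
theorem ivp_solution_via_branches (a : ℝ) (u Q S₁ S₂ : ℝ → ℝ)
    (hu : ContDiff ℝ 1 u) (hQ : Continuous Q)
    (hS₁ : ContDiff ℝ 1 S₁) (hS₂ : ContDiff ℝ 1 S₂)
    (hpos : ∀ x, 0 < S₁ x)
    (hp : ∀ x, deriv (fun y => S₁ y + S₂ y) x + (S₁ x + S₂ x) ^ 2 =
      Q x + (u x) ^ 2 / 4 + deriv u x / 2)
    (hm : ∀ x, deriv (fun y => -S₁ y + S₂ y) x + (-S₁ x + S₂ x) ^ 2 =
      Q x + (u x) ^ 2 / 4 + deriv u x / 2)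
    (φ : ℝ → ℝ)
    (hφdiff : Differentiable ℝ φ) (hφdiff2 : Differentiable ℝ (deriv φ))
    (hode : ∀ x, deriv (deriv φ) x + u x * deriv φ x - Q x * φ x = 0)
    (hφa : φ a = 0) (hφ'a : deriv φ a = 1) :
    ∀ b : ℝ, a ≤ b →
      φ b = Real.exp (∫ x in a..b, (S₁ x - u x / 2)) *
        (1 - Real.exp (-2 * ∫ x in a..b, S₁ x)) /
        (2 * Real.sqrt (S₁ a * S₁ b)) := by
  intro b _
  have cu := hu.continuous
  have c1 := hS₁.continuous
  have c2 := hS₂.continuous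
  have du : ∀ x, HasDerivAt u (deriv u x) x := fun x =>
    (hu.differentiable (by norm_num) x).hasDerivAt
  have d1 : ∀ x, HasDerivAt S₁ (deriv S₁ x) x := fun x =>
    (hS₁.differentiable (by norm_num) x).hasDerivAt
  have d2 : ∀ x, HasDerivAt S₂ (deriv S₂ x) x := fun x =>
    (hS₂.differentiable (by norm_num) x).hasDerivAt
  have dφ : ∀ x, HasDerivAt φ (deriv φ x) x := fun x => (hφdiff x).hasDerivAt
  have dφ2 : ∀ x, HasDerivAt (deriv φ) (deriv (deriv φ) x) x := fun x =>
    (hφdiff2 x).hasDerivAt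
  have ep : ∀ x, deriv S₁ x + deriv S₂ x + (S₁ x + S₂ x) ^ 2 =
      Q x + (u x) ^ 2 / 4 + deriv u x / 2 := fun x => by
    rw [← hp x, ((d1 x).fun_add (d2 x)).deriv]
  have em : ∀ x, -deriv S₁ x + deriv S₂ x + (-S₁ x + S₂ x) ^ 2 =
      Q x + (u x) ^ 2 / 4 + deriv u x / 2 := fun x => by
    rw [← hm x, ((d1 x).fun_neg.fun_add (d2 x)).deriv]
  have key : ∀ S : ℝ → ℝ, ∀ S' : ℝ → ℝ, Continuous S → (∀ x, HasDerivAt S (S' x) x) →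
      (∀ x, S' x + S x ^ 2 = Q x + (u x) ^ 2 / 4 + deriv u x / 2) →
      deriv φ b + (u b / 2 - S b) * φ b =
        Real.exp (∫ x in a..b, (-(u x / 2) - S x)) := by
    intro S S' cS dS eS
    have h := linear_ode_aux a (fun x => deriv φ x + (u x / 2 - S x) * φ x)
      (fun x => -(u x / 2) - S x) (by fun_prop) (fun x => by
        have h := (dφ2 x).fun_add ((((du x).div_const 2).fun_sub (dS x)).fun_mul (dφ x))
        refine h.congr_deriv ?_
        linear_combination hode x - φ x * eS x) b
    simpa [hφa, hφ'a] using h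
  have kp := key (fun x => S₁ x + S₂ x) _ (by fun_prop) (fun x => (d1 x).fun_add (d2 x)) ep
  have km := key (fun x => -S₁ x + S₂ x) _ (by fun_prop)
    (fun x => (d1 x).fun_neg.fun_add (d2 x)) em
  have k1 := linear_ode_aux a S₁ (fun x => -2 * S₂ x) (by fun_prop) (fun x => by
    refine (d1 x).congr_deriv ?_
    linear_combination (1/2 : ℝ) * ep x - (1/2 : ℝ) * em x) b
  have i1 : ∀ c d, IntervalIntegrable S₁ MeasureTheory.volume c d :=
    fun c d => c1.intervalIntegrable c d
  have i2 : ∀ c d, IntervalIntegrable S₂ MeasureTheory.volume c d :=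
    fun c d => c2.intervalIntegrable c d
  have iu : ∀ c d, IntervalIntegrable (fun x => u x / 2) MeasureTheory.volume c d :=
    fun c d => (cu.div_const 2).intervalIntegrable c d
  have iun : IntervalIntegrable (fun x => -(u x / 2)) MeasureTheory.volume a b := (iu a b).neg
  have i1n : IntervalIntegrable (fun x => -S₁ x) MeasureTheory.volume a b := (i1 a b).neg
  have Ip : ∫ x in a..b, (-(u x / 2) - (S₁ x + S₂ x)) =
      -(∫ x in a..b, u x / 2) - ((∫ x in a..b, S₁ x) + ∫ x in a..b, S₂ x) := by
    rw [intervalIntegral.integral_sub iun ((i1 a b).add (i2 a b)),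
      intervalIntegral.integral_neg, intervalIntegral.integral_add (i1 a b) (i2 a b)]
  have Im : ∫ x in a..b, (-(u x / 2) - (-S₁ x + S₂ x)) =
      -(∫ x in a..b, u x / 2) - (-(∫ x in a..b, S₁ x) + ∫ x in a..b, S₂ x) := by
    rw [intervalIntegral.integral_sub iun (i1n.add (i2 a b)),
      intervalIntegral.integral_neg, intervalIntegral.integral_add i1n (i2 a b),
      intervalIntegral.integral_neg]
  rw [Ip] at kp
  rw [Im] at km
  rw [intervalIntegral.integral_const_mul] at k1
  rw [intervalIntegral.integral_sub (i1 a b) (iu a b)]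
  generalize (∫ x in a..b, u x / 2) = U at *
  generalize (∫ x in a..b, S₁ x) = A at *
  generalize (∫ x in a..b, S₂ x) = B at *
  have hE : Real.exp (-2 * B) = Real.exp (-B) ^ 2 := by
    rw [← Real.exp_nat_mul]; congr 1; push_cast; ring
  rw [hE] at k1
  have hpa := hpos a
  have hEpos := Real.exp_pos (-B)
  have hs : Real.sqrt (S₁ a * S₁ b) = S₁ a * Real.exp (-B) := by
    rw [k1, show S₁ a * (S₁ a * Real.exp (-B) ^ 2) = (S₁ a * Real.exp (-B)) ^ 2 by ring]
    exact Real.sqrt_sq (by positivity)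
  have e1 : Real.exp (-U - (A + B)) = Real.exp (A - U) * Real.exp (-2 * A) * Real.exp (-B) := by
    rw [← Real.exp_add, ← Real.exp_add]; congr 1; ring
  have e2 : Real.exp (-U - (-A + B)) = Real.exp (A - U) * Real.exp (-B) := by
    rw [← Real.exp_add]; congr 1; ring
  rw [e1] at kp
  rw [e2] at km
  rw [hs, eq_div_iff (by positivity)]
  apply mul_right_cancel₀ hEpos.ne'
  linear_combination km - kp - 2 * φ b * k1
end

section
/- Let f : ℝ → ℝ be twice continuously differentiable with f(x) > 0 for all x, let a < b be real numbers, set u(x) = f'(x)/f(x) − f'(x)f''(x)/(1 + f'(x)²), and let k > 0 be a real number. Define φ(x) = (f(a)/√(1 + f'(a)²)) · sinh(k ∫_a^x (√(1 + f'(σ)²)/f(σ)) dσ)/k. Then φ satisfies φ''(x) + u(x)φ'(x) − k²((1 + f'(x)²)/f(x)²)φ(x) = 0 for all x, with φ(a) = 0 and φ'(a) = 1; in particular φ(b) = (f(a)/√(1 + f'(a)²)) · (e^{kA} − e^{−kA})/(2k), where A = ∫_a^b (√(1 + f'(x)²)/f(x)) dx. -/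
/-- For `f` C² positive, `u = f'/f − f'f''/(1+f'²)` and `k > 0`, the function
`φ(x) = (f(a)/√(1+f'(a)²)) sinh(k∫_a^x √(1+f'²)/f)/k` solves
`φ'' + uφ' − k²((1+f'²)/f²)φ = 0` with `φ(a) = 0`, `φ'(a) = 1`, and
`φ(b) = (f(a)/√(1+f'(a)²))·(e^{kA} − e^{−kA})/(2k)` where `A = ∫_a^b √(1+f'²)/f`. -/
theorem angular_mode_exact_solution (f : ℝ → ℝ) (hf : ContDiff ℝ 2 f)
    (hfpos : ∀ x, 0 < f x) (a b : ℝ) (hab : a < b)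
    (u : ℝ → ℝ)
    (hu : ∀ x, u x = deriv f x / f x -
      deriv f x * deriv (deriv f) x / (1 + (deriv f x) ^ 2))
    (k : ℝ) (hk : 0 < k)
    (φ : ℝ → ℝ)
    (hφ : ∀ x, φ x = (f a / Real.sqrt (1 + (deriv f a) ^ 2)) *
      Real.sinh (k * ∫ σ in a..x, Real.sqrt (1 + (deriv f σ) ^ 2) / f σ) / k) :
    (∀ x, deriv (deriv φ) x + u x * deriv φ x -
        k ^ 2 * ((1 + (deriv f x) ^ 2) / (f x) ^ 2) * φ x = 0) ∧
      φ a = 0 ∧ deriv φ a = 1 ∧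
      φ b = (f a / Real.sqrt (1 + (deriv f a) ^ 2)) *
        (Real.exp (k * ∫ x in a..b, Real.sqrt (1 + (deriv f x) ^ 2) / f x) -
          Real.exp (-(k * ∫ x in a..b, Real.sqrt (1 + (deriv f x) ^ 2) / f x))) /
        (2 * k) := by
  have hf1 : ContDiff ℝ 1 (deriv f) := by
    have h2 : ContDiff ℝ (1 + 1) f := by
      norm_num
      exact hf
    exact (contDiff_succ_iff_deriv.1 h2).2.2
  have hdf : ∀ x, HasDerivAt f (deriv f x) x := fun x =>
    ((hf.differentiable (by norm_num)) x).hasDerivAt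
  have hdp : ∀ x, HasDerivAt (deriv f) (deriv (deriv f) x) x := fun x =>
    ((hf1.differentiable (by norm_num)) x).hasDerivAt
  have hpos : ∀ x, 0 < 1 + (deriv f x) ^ 2 := fun x => by positivity
  have hS : ∀ x, 0 < Real.sqrt (1 + (deriv f x) ^ 2) := fun x => Real.sqrt_pos.2 (hpos x)
  have hcont : Continuous (fun σ => Real.sqrt (1 + (deriv f σ) ^ 2) / f σ) := by
    refine Continuous.div ?_ hf.continuous (fun x => (hfpos x).ne')
    have := hf1.continuous
    fun_prop
  have hG : ∀ x, HasDerivAt (fun x => ∫ σ in a..x, Real.sqrt (1 + (deriv f σ) ^ 2) / f σ)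
      (Real.sqrt (1 + (deriv f x) ^ 2) / f x) x := fun x =>
    hcont.integral_hasStrictDerivAt a x |>.hasDerivAt
  have hg : ∀ x, HasDerivAt (fun σ => Real.sqrt (1 + (deriv f σ) ^ 2) / f σ)
      ((deriv f x * deriv (deriv f) x / Real.sqrt (1 + (deriv f x) ^ 2) * f x
        - Real.sqrt (1 + (deriv f x) ^ 2) * deriv f x) / (f x) ^ 2) x := by
    intro x
    have h1 := ((((hdp x).pow 2).const_add 1).sqrt (hpos x).ne').div (hdf x) (hfpos x).ne'
    refine HasDerivAt.congr_deriv (f := fun σ => Real.sqrt (1 + (deriv f σ) ^ 2) / f σ) h1 ?_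
    have := (hS x).ne'
    simp only [Pi.pow_apply, Nat.cast_ofNat]
    field_simp
    ring
  have hφ' : deriv φ = fun x => (f a / Real.sqrt (1 + (deriv f a) ^ 2)) *
      (Real.cosh (k * ∫ σ in a..x, Real.sqrt (1 + (deriv f σ) ^ 2) / f σ) *
        (Real.sqrt (1 + (deriv f x) ^ 2) / f x)) := by
    funext x
    rw [funext hφ]
    have h := ((((hG x).const_mul k).sinh).const_mul
      (f a / Real.sqrt (1 + (deriv f a) ^ 2))).div_const k
    rw [h.deriv]
    field_simp
  refine ⟨fun x => ?_, ?_, ?_, ?_⟩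
  · have h := ((((hG x).const_mul k).cosh).mul (hg x)).const_mul
      (f a / Real.sqrt (1 + (deriv f a) ^ 2))
    have h2 := (h.congr_of_eventuallyEq (f₁ := deriv φ)
      (Filter.Eventually.of_forall (fun y => congrFun hφ' y))).deriv
    rw [h2, hφ', hu, hφ]
    beta_reduce
    have hs := (hS x).ne'
    have hsq : 1 + (deriv f x) ^ 2 = Real.sqrt (1 + (deriv f x) ^ 2) ^ 2 :=
      (Real.sq_sqrt (hpos x).le).symm
    have hfx := (hfpos x).ne'
    generalize (∫ σ in a..x, Real.sqrt (1 + (deriv f σ) ^ 2) / f σ) = G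
    generalize f a / Real.sqrt (1 + (deriv f a) ^ 2) = C
    generalize Real.sqrt (1 + (deriv f x) ^ 2) = S at *
    rw [hsq]
    field_simp
    ring
  · rw [hφ]; simp
  · have h1 := (hS a).ne'
    have h2 := (hfpos a).ne'
    rw [hφ']
    simp only [intervalIntegral.integral_same, mul_zero, Real.cosh_zero, one_mul]
    field_simp
  · rw [hφ, Real.sinh_eq]
    field_simp
end

section
/- Let L > 0 be real and let s be a complex number with Re(s) > 1. Then for each n ≥ 1 the function k ↦ (k² + (nπ/L)²)^{−s} is integrable over ℝ, the resulting series over n converges absolutely, and ∑_{n=1}^∞ ∫_{−∞}^∞ (k² + (nπ/L)²)^{−s} dk = √π · ζ(2s−1) · (Γ(s − 1/2)/Γ(s)) · (L/π)^{2s−1}. -/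
open Real Complex

open MeasureTheory in
lemma base_integral (s : ℂ) (hs : 1 < s.re) :
    ∫ k : ℝ, ((k ^ 2 + 1 : ℝ) : ℂ) ^ (-s) =
      ((Real.sqrt π : ℝ) : ℂ) * (Complex.Gamma (s - 1 / 2) / Complex.Gamma s) := by
  have hG : Complex.Gamma s ≠ 0 := Complex.Gamma_ne_zero_of_re_pos (by linarith)
  let F : ℝ → ℝ → ℂ := fun k t =>
    ((t : ℂ) ^ (s - 1) * ((rexp (-t) : ℝ) : ℂ)) * ((rexp (-t * k ^ 2) : ℝ) : ℂ)
  have h1 : ∀ k : ℝ, ∫ t in Set.Ioi (0 : ℝ), F k t =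
      ((k ^ 2 + 1 : ℝ) : ℂ) ^ (-s) * Complex.Gamma s := by
    intro k
    have hk : 0 < k ^ 2 + 1 := by positivity
    have := Complex.integral_cpow_mul_exp_neg_mul_Ioi (a := s) (r := k ^ 2 + 1)
      (by linarith) hk
    rw [one_div, Complex.inv_cpow_ofReal_nonneg hk.le, ← Complex.cpow_neg] at this
    rw [← this]
    congr 1
    ext t
    simp only [F]
    rw [mul_assoc]
    congr 1
    push_cast
    rw [← Complex.exp_add]
    congr 1
    ring
  have hsq : ∀ t : ℝ, 0 < t → ((√(π / t) : ℝ) : ℂ) = ((√π : ℝ) : ℂ) * (t : ℂ) ^ (-(1 / 2) : ℂ) := by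
    intro t ht
    rw [Real.sqrt_div pi_pos.le, Complex.ofReal_div, div_eq_mul_inv, Complex.cpow_neg,
      Real.sqrt_eq_rpow t, Complex.ofReal_cpow ht.le]
    norm_num
  have h2 : ∀ t : ℝ, 0 < t → ∫ k, F k t =
      ((√π : ℝ) : ℂ) * (((rexp (-t) : ℝ) : ℂ) * (t : ℂ) ^ (s - 1 / 2 - 1)) := by
    intro t ht
    have ht' : (t : ℂ) ≠ 0 := by exact_mod_cast ht.ne'
    simp only [F]
    rw [integral_const_mul, integral_complex_ofReal, integral_gaussian, hsq t ht,
      show s - 1 / 2 - 1 = (s - 1) + (-(1 / 2)) by ring, Complex.cpow_add _ _ ht']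
    ring
  have hint : Integrable (Function.uncurry F)
      ((volume : Measure ℝ).prod (volume.restrict (Set.Ioi (0 : ℝ)))) := by
    rw [integrable_prod_iff']
    · constructor
      · refine (ae_restrict_iff' measurableSet_Ioi).mpr (Filter.Eventually.of_forall ?_)
        intro t ht
        simp only [Function.uncurry, F]
        exact ((integrable_exp_neg_mul_sq ht).ofReal (𝕜 := ℂ)).const_mul
          ((t : ℂ) ^ (s - 1) * ((rexp (-t) : ℝ) : ℂ))
      · have hI := ((Complex.GammaIntegral_convergent (s := s - 1 / 2)
          (by norm_num; linarith)).norm).const_mul (√π)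
        refine hI.congr ?_
        refine (ae_restrict_iff' measurableSet_Ioi).mpr (Filter.Eventually.of_forall ?_)
        intro t ht
        have ht0 : (0 : ℝ) < t := ht
        have ht' : (t : ℂ) ≠ 0 := by exact_mod_cast ht0.ne'
        simp only [Function.uncurry, F, norm_mul, Complex.norm_real, Real.norm_eq_abs, abs_exp]
        rw [integral_const_mul, integral_gaussian, Real.sqrt_div pi_pos.le,
          Complex.norm_cpow_eq_rpow_re_of_pos ht0, Complex.norm_cpow_eq_rpow_re_of_pos ht0,
          show (s - 1 / 2 - 1).re = (s - 1).re + (-(1 / 2)) by norm_num; ring,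
          Real.rpow_add ht0, Real.rpow_neg ht0.le, ← Real.sqrt_eq_rpow]
        ring
    · apply Measurable.aestronglyMeasurable
      simp only [Function.uncurry_def, F]
      fun_prop
  have hsw := integral_integral_swap hint
  simp only [h1] at hsw
  rw [integral_mul_const, setIntegral_congr_fun measurableSet_Ioi (fun t ht => h2 t ht),
    integral_const_mul] at hsw
  rw [Complex.Gamma_eq_integral (s := s - 1 / 2) (by norm_num; linarith), Complex.GammaIntegral,
    ← mul_div_assoc, eq_div_iff hG, hsw]

lemma scale_aux (s : ℂ) (a : ℝ) (ha : 0 < a) (k : ℝ) :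
    ((k ^ 2 + a ^ 2 : ℝ) : ℂ) ^ (-s) =
      (a : ℂ) ^ (-(2 * s)) * ((((k / a) ^ 2 + 1 : ℝ)) : ℂ) ^ (-s) := by
  have ha' : (a : ℂ) ≠ 0 := by exact_mod_cast ha.ne'
  have h : k ^ 2 + a ^ 2 = (a * a) * ((k / a) ^ 2 + 1) := by field_simp
  rw [h, Complex.ofReal_mul, Complex.mul_cpow_ofReal_nonneg (by positivity) (by positivity),
    Complex.ofReal_mul, Complex.mul_cpow_ofReal_nonneg ha.le ha.le, ← Complex.cpow_add _ _ ha']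
  congr 2
  ring

lemma scaled_integral (s : ℂ) (hs : 1 < s.re) (a : ℝ) (ha : 0 < a) :
    ∫ k : ℝ, ((k ^ 2 + a ^ 2 : ℝ) : ℂ) ^ (-s) =
      (a : ℂ) ^ (-(2 * s - 1)) *
        (((Real.sqrt π : ℝ) : ℂ) * (Complex.Gamma (s - 1 / 2) / Complex.Gamma s)) := by
  have ha' : (a : ℂ) ≠ 0 := by exact_mod_cast ha.ne'
  simp_rw [scale_aux s a ha]
  rw [MeasureTheory.integral_const_mul,
    MeasureTheory.Measure.integral_comp_div (fun u : ℝ => ((u ^ 2 + 1 : ℝ) : ℂ) ^ (-s)) a,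
    base_integral s hs, abs_of_pos ha,
    show -(2 * s - 1) = -(2 * s) + 1 by ring, Complex.cpow_add _ _ ha', Complex.cpow_one,
    Complex.real_smul]
  ring

lemma scaled_integrable (s : ℂ) (hs : 1 < s.re) (a : ℝ) (ha : 0 < a) :
    MeasureTheory.Integrable (fun k : ℝ => ((k ^ 2 + a ^ 2 : ℝ) : ℂ) ^ (-s)) := by
  simp_rw [scale_aux s a ha]
  refine MeasureTheory.Integrable.const_mul ?_ _
  refine MeasureTheory.Integrable.comp_div
    (g := fun u : ℝ => ((u ^ 2 + 1 : ℝ) : ℂ) ^ (-s)) ?_ ha.ne'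
  have h := integrable_rpow_neg_one_add_norm_sq (E := ℝ) (μ := MeasureTheory.volume)
    (r := 2 * s.re) (by simp; linarith)
  refine h.mono' (Measurable.aestronglyMeasurable (by fun_prop)) (Filter.Eventually.of_forall ?_)
  intro k
  rw [Complex.norm_cpow_eq_rpow_re_of_pos (by positivity)]
  apply le_of_eq
  simp only [Real.norm_eq_abs, sq_abs, Complex.neg_re]
  congr 1 <;> ring

/-- Zeta function density of the Dirichlet Laplacian on an infinite planar stripe of
width `L`: for `Re s > 1`, each `k ↦ (k² + (nπ/L)²)^{−s}` is integrable, the series of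
the integrals converges absolutely, and
`∑_{n=1}^∞ ∫_ℝ (k² + (nπ/L)²)^{−s} dk = √π ζ(2s−1) (Γ(s−1/2)/Γ(s)) (L/π)^{2s−1}`. -/
theorem stripe_zeta_density (L : ℝ) (hL : 0 < L) (s : ℂ) (hs : 1 < s.re) :
    (∀ n : ℕ, 1 ≤ n →
        MeasureTheory.Integrable
          (fun k : ℝ => ((k ^ 2 + ((n : ℝ) * π / L) ^ 2 : ℝ) : ℂ) ^ (-s))) ∧
      Summable (fun n : ℕ =>
        ‖∫ k : ℝ, ((k ^ 2 + (((n : ℝ) + 1) * π / L) ^ 2 : ℝ) : ℂ) ^ (-s)‖) ∧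
      (∑' n : ℕ, ∫ k : ℝ, ((k ^ 2 + (((n : ℝ) + 1) * π / L) ^ 2 : ℝ) : ℂ) ^ (-s)) =
        ((Real.sqrt π : ℝ) : ℂ) * riemannZeta (2 * s - 1) *
          (Complex.Gamma (s - 1 / 2) / Complex.Gamma s) *
          ((L / π : ℝ) : ℂ) ^ (2 * s - 1) := by
  have key : ∀ n : ℕ, ∫ k : ℝ, ((k ^ 2 + (((n : ℝ) + 1) * π / L) ^ 2 : ℝ) : ℂ) ^ (-s) =
      (1 / ((n : ℂ) + 1) ^ (2 * s - 1)) * (((L / π : ℝ) : ℂ) ^ (2 * s - 1) *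
        (((Real.sqrt π : ℝ) : ℂ) * (Complex.Gamma (s - 1 / 2) / Complex.Gamma s))) := by
    intro n
    have hn : (0 : ℝ) < (n : ℝ) + 1 := by positivity
    rw [scaled_integral s hs _ (by positivity), ← mul_assoc (1 / ((n : ℂ) + 1) ^ (2 * s - 1))]
    congr 1
    have e : ((n : ℝ) + 1) * π / L = ((n : ℝ) + 1) * (L / π)⁻¹ := by
      rw [inv_div, mul_div_assoc]
    have hLp : 0 ≤ L / π := by positivity
    rw [e, Complex.ofReal_mul, Complex.mul_cpow_ofReal_nonneg hn.le (by positivity),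
      Complex.ofReal_inv, Complex.inv_cpow_ofReal_nonneg hLp, Complex.cpow_neg, Complex.cpow_neg,
      inv_inv, one_div]
    norm_num
  have hre : 1 < (2 * s - 1).re := by
    norm_num
    linarith
  have hsum : Summable (fun n : ℕ => 1 / ((n : ℂ) + 1) ^ (2 * s - 1)) := by
    have := (summable_nat_add_iff 1).mpr (Complex.summable_one_div_nat_cpow.mpr hre)
    simpa using this
  refine ⟨?_, ?_, ?_⟩
  · intro n hn
    have hn' : (0 : ℝ) < n := by exact_mod_cast hn
    exact scaled_integrable s hs _ (by positivity)
  · simp_rw [key]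
    exact (hsum.mul_right _).norm
  · simp_rw [key]
    rw [tsum_mul_right, ← zeta_eq_tsum_one_div_nat_add_one_cpow hre]
    ring
end

section
/- Let L > 0 be real and define F(s) = √π · ζ(2s−1) · (Γ(s − 1/2)/Γ(s)) · (L/π)^{2s−1} for complex s. Then (s − 1)·F(s) tends to L/2 as s → 1 (s ≠ 1); i.e., the residue of F at its simple pole s = 1 equals L/2. -/
open Real Complex Filter

/-- The stripe zeta density `F(s) = √π ζ(2s−1)(Γ(s−1/2)/Γ(s))(L/π)^{2s−1}` has a simple
pole at `s = 1` with residue `L/2`: `(s−1)F(s) → L/2` as `s → 1`, `s ≠ 1`. -/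
theorem stripe_zeta_residue_at_one (L : ℝ) (hL : 0 < L) (F : ℂ → ℂ)
    (hF : ∀ s : ℂ, F s = ((Real.sqrt π : ℝ) : ℂ) * riemannZeta (2 * s - 1) *
      (Complex.Gamma (s - 1 / 2) / Complex.Gamma s) *
      ((L / π : ℝ) : ℂ) ^ (2 * s - 1)) :
    Tendsto (fun s : ℂ => (s - 1) * F s) (nhdsWithin 1 {(1 : ℂ)}ᶜ)
      (nhds ((L : ℂ) / 2)) := by
  have hz : Tendsto (fun s : ℂ => (2 * s - 1 - 1) * riemannZeta (2 * s - 1))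
      (nhdsWithin 1 {(1 : ℂ)}ᶜ) (nhds 1) := by
    refine riemannZeta_residue_one.comp (f := fun s : ℂ => 2 * s - 1) ?_
    refine tendsto_nhdsWithin_iff.mpr ⟨?_, ?_⟩
    · have h : ContinuousAt (fun s : ℂ => 2 * s - 1) 1 := by fun_prop
      have h2 := h.tendsto
      norm_num at h2
      exact h2.mono_left nhdsWithin_le_nhds
    · filter_upwards [self_mem_nhdsWithin] with s hs h
      apply hs
      have h' : 2 * s - 1 = 1 := h
      show s = 1
      linear_combination h' / 2
  have hg1 : ContinuousAt (fun s : ℂ => Complex.Gamma (s - 1 / 2)) 1 := by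
    have h : ContinuousAt Complex.Gamma ((fun s : ℂ => s - 1 / 2) 1) := by
      refine (Complex.differentiableAt_Gamma _ fun m h => ?_).continuousAt
      have := congrArg Complex.re h
      norm_num at this
      have hm : (0 : ℝ) ≤ m := m.cast_nonneg
      linarith
    exact ContinuousAt.comp (f := fun s : ℂ => s - 1 / 2) h (by fun_prop)
  have hg2 : ContinuousAt Complex.Gamma 1 := by
    refine (Complex.differentiableAt_Gamma _ fun m h => ?_).continuousAt
    have := congrArg Complex.re h
    norm_num at this
    have hm : (0 : ℝ) ≤ m := m.cast_nonneg
    linarith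
  have hLp : ((L / π : ℝ) : ℂ) ≠ 0 := by
    exact_mod_cast (div_pos hL Real.pi_pos).ne'
  have hp : ContinuousAt (fun s : ℂ => ((L / π : ℝ) : ℂ) ^ (2 * s - 1)) 1 := by
    refine ContinuousAt.const_cpow (by fun_prop) (Or.inl hLp)
  have hc : ContinuousAt (fun s : ℂ => ((Real.sqrt π : ℝ) : ℂ) / 2 *
      (Complex.Gamma (s - 1 / 2) / Complex.Gamma s) * ((L / π : ℝ) : ℂ) ^ (2 * s - 1)) 1 :=
    (continuousAt_const.mul (hg1.div hg2 (by simp))).mul hp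
  have hlim := hz.mul (hc.tendsto.mono_left nhdsWithin_le_nhds)
  have hG : Complex.Gamma (1 - 1 / 2) = ((Real.sqrt π : ℝ) : ℂ) := by
    rw [← Real.Gamma_one_half_eq, ← Complex.Gamma_ofReal]
    norm_num
  have hpi : (π : ℂ) ≠ 0 := by exact_mod_cast Real.pi_ne_zero
  have hsq : ((Real.sqrt π : ℝ) : ℂ) * ((Real.sqrt π : ℝ) : ℂ) = (π : ℂ) := by
    exact_mod_cast Real.mul_self_sqrt Real.pi_pos.le
  have he : (2 * (1 : ℂ) - 1) = 1 := by norm_num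
  have hval : (1 : ℂ) * (((Real.sqrt π : ℝ) : ℂ) / 2 *
      (Complex.Gamma (1 - 1 / 2) / Complex.Gamma 1) * ((L / π : ℝ) : ℂ) ^ (2 * (1 : ℂ) - 1))
      = (L : ℂ) / 2 := by
    rw [hG, Complex.Gamma_one, he, Complex.cpow_one, Complex.ofReal_div]
    field_simp
    linear_combination (L : ℂ) * hsq
  rw [hval] at hlim
  refine hlim.congr fun s => ?_
  rw [hF]
  ring
end

section
/- Let L > 0 be real and define F(s) = √π · ζ(2s−1) · (Γ(s − 1/2)/Γ(s)) · (L/π)^{2s−1} for complex s. Then (s − 1/2)·F(s) tends to −1/2 as s → 1/2 (s ≠ 1/2); i.e., the residue of F at s = 1/2 equals −1/2. -/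
open Real Complex Filter

lemma gamma_diff_of_re_pos {s : ℂ} (hs : 0 < s.re) :
    DifferentiableAt ℂ Complex.Gamma s := by
  apply Complex.differentiableAt_Gamma
  intro m h
  rw [h] at hs
  simp only [Complex.neg_re, Complex.natCast_re] at hs
  have : (0 : ℝ) ≤ m := Nat.cast_nonneg m
  linarith

/-- The stripe zeta density `F(s) = √π ζ(2s−1)(Γ(s−1/2)/Γ(s))(L/π)^{2s−1}` has a simple
pole at `s = 1/2` with residue `−1/2`: `(s−1/2)F(s) → −1/2` as `s → 1/2`, `s ≠ 1/2`. -/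
theorem stripe_zeta_residue_at_half (L : ℝ) (hL : 0 < L) (F : ℂ → ℂ)
    (hF : ∀ s : ℂ, F s = ((Real.sqrt π : ℝ) : ℂ) * riemannZeta (2 * s - 1) *
      (Complex.Gamma (s - 1 / 2) / Complex.Gamma s) *
      ((L / π : ℝ) : ℂ) ^ (2 * s - 1)) :
    Tendsto (fun s : ℂ => (s - 1 / 2) * F s) (nhdsWithin (1 / 2) {(1 / 2 : ℂ)}ᶜ)
      (nhds (-(1 / 2 : ℂ))) := by
  have hLp : ((L / π : ℝ) : ℂ) ≠ 0 := by
    exact_mod_cast (div_pos hL Real.pi_pos).ne'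
  have hsq : ((Real.sqrt π : ℝ) : ℂ) ≠ 0 := by
    exact_mod_cast (Real.sqrt_pos.mpr Real.pi_pos).ne'
  have hG : Complex.Gamma (1 / 2) = ((Real.sqrt π : ℝ) : ℂ) := by
    rw [← Real.Gamma_one_half_eq, ← Complex.Gamma_ofReal]
    push_cast
    rfl
  have h0 : (2 * (1 / 2 : ℂ) - 1) = 0 := by norm_num
  have h1 : ((1 / 2 : ℂ) + 1 / 2) = 1 := by norm_num
  have hz : ContinuousAt (fun s : ℂ => riemannZeta (2 * s - 1)) (1 / 2) := by
    apply ContinuousAt.comp (g := riemannZeta) (f := fun s : ℂ => 2 * s - 1)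
    · exact (differentiableAt_riemannZeta (by rw [h0]; exact zero_ne_one)).continuousAt
    · fun_prop
  have hg1 : ContinuousAt (fun s : ℂ => Complex.Gamma (s + 1 / 2)) (1 / 2) := by
    apply ContinuousAt.comp (g := Complex.Gamma) (f := fun s : ℂ => s + 1 / 2)
    · rw [h1]
      refine (gamma_diff_of_re_pos ?_).continuousAt
      simp
    · fun_prop
  have hg2 : ContinuousAt Complex.Gamma (1 / 2) := by
    refine (gamma_diff_of_re_pos ?_).continuousAt
    norm_num
  have hp : ContinuousAt (fun s : ℂ => ((L / π : ℝ) : ℂ) ^ (2 * s - 1)) (1 / 2) := by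
    apply ContinuousAt.const_cpow
    · fun_prop
    · exact Or.inl hLp
  have hc := ((hz.const_mul ((Real.sqrt π : ℝ) : ℂ)).mul
    (hg1.div hg2 (by rw [hG]; exact hsq))).mul hp
  have ht := hc.tendsto.mono_left (nhdsWithin_le_nhds (s := {(1 / 2 : ℂ)}ᶜ))
  have hv : ((Real.sqrt π : ℝ) : ℂ) * riemannZeta (2 * (1 / 2) - 1) *
      (Complex.Gamma (1 / 2 + 1 / 2) / Complex.Gamma (1 / 2)) *
      ((L / π : ℝ) : ℂ) ^ (2 * (1 / 2 : ℂ) - 1) = -(1 / 2 : ℂ) := by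
    rw [h0, h1, hG, riemannZeta_zero, Complex.Gamma_one, Complex.cpow_zero]
    field_simp
  rw [← hv]
  refine Tendsto.congr' ?_ ht
  filter_upwards [self_mem_nhdsWithin] with s hs
  have hs' : s - 1 / 2 ≠ 0 := sub_ne_zero.mpr hs
  have e : Complex.Gamma (s + 1 / 2) = (s - 1 / 2) * Complex.Gamma (s - 1 / 2) := by
    rw [← Complex.Gamma_add_one _ hs']
    congr 1
    ring
  simp only [Pi.mul_apply, Pi.div_apply]
  rw [hF, e]
  ring
end

section
/- Let L > 0 be real and define F(s) = √π · ζ(2s−1) · (Γ(s − 1/2)/Γ(s)) · (L/π)^{2s−1} for complex s. Then F(s)/s tends to π²/(6L) as s → 0 (s ≠ 0). In particular F extends continuously to s = 0 with value F(0) = 0, and the derivative of this extension at 0 equals π²/(6L). -/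
open Real Complex Filter

/-- The stripe zeta density `F(s) = √π ζ(2s−1)(Γ(s−1/2)/Γ(s))(L/π)^{2s−1}` satisfies
`F(s)/s → π²/(6L)` as `s → 0`, `s ≠ 0`; hence the extension of `F` with value `0` at
`s = 0` is differentiable at `0` with derivative `π²/(6L)`. -/
theorem stripe_zeta_derivative_at_zero (L : ℝ) (hL : 0 < L) (F : ℂ → ℂ)
    (hF : ∀ s : ℂ, F s = ((Real.sqrt π : ℝ) : ℂ) * riemannZeta (2 * s - 1) *
      (Complex.Gamma (s - 1 / 2) / Complex.Gamma s) *
      ((L / π : ℝ) : ℂ) ^ (2 * s - 1)) :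
    Tendsto (fun s : ℂ => F s / s) (nhdsWithin 0 {(0 : ℂ)}ᶜ)
        (nhds ((π ^ 2 / (6 * L) : ℝ) : ℂ)) ∧
      HasDerivAt (Function.update F 0 0) ((π ^ 2 / (6 * L) : ℝ) : ℂ) 0 := by
  have hz : riemannZeta (-1) = -1 / 12 := by
    have h := riemannZeta_neg_nat_eq_bernoulli 1
    norm_num [bernoulli_two, bernoulli_eq_bernoulli'_of_ne_one] at h
    rw [h]; norm_num
  have hg : Complex.Gamma (-1 / 2) = -2 * ((Real.sqrt π : ℝ) : ℂ) := by
    have h := Complex.Gamma_add_one (-1 / 2) (by norm_num)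
    have e : (-1 / 2 + 1 : ℂ) = (1 / 2 : ℝ) := by push_cast; norm_num
    rw [e, Complex.Gamma_ofReal, Real.Gamma_one_half_eq] at h
    rw [h]; ring
  have hsq : ((Real.sqrt π : ℝ) : ℂ) * ((Real.sqrt π : ℝ) : ℂ) = (π : ℂ) := by
    rw [← Complex.ofReal_mul, Real.mul_self_sqrt Real.pi_pos.le]
  have hpi : (π : ℂ) ≠ 0 := by exact_mod_cast Real.pi_ne_zero
  have hLc : (L : ℂ) ≠ 0 := by exact_mod_cast hL.ne'
  have hLp : ((L / π : ℝ) : ℂ) ≠ 0 := by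
    exact_mod_cast (div_pos hL Real.pi_pos).ne'
  have hgd : DifferentiableAt ℂ Complex.Gamma ((0 : ℂ) - 1 / 2) := by
    apply Complex.differentiableAt_Gamma
    intro m h
    have h2 : ((2 * m : ℕ) : ℂ) = ((1 : ℕ) : ℂ) := by
      push_cast
      linear_combination 2 * h
    have := Nat.cast_injective h2
    omega
  have hc : ContinuousAt (fun s : ℂ => ((Real.sqrt π : ℝ) : ℂ) * riemannZeta (2 * s - 1) *
      (Complex.Gamma (s - 1 / 2) * (Complex.Gamma (s + 1))⁻¹) *
      ((L / π : ℝ) : ℂ) ^ (2 * s - 1)) 0 := by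
    have c1 : ContinuousAt (fun s : ℂ => riemannZeta (2 * s - 1)) 0 :=
      ContinuousAt.comp (f := fun s : ℂ => 2 * s - 1) (g := riemannZeta)
        (differentiableAt_riemannZeta (by norm_num)).continuousAt (by fun_prop)
    have c2 : ContinuousAt (fun s : ℂ => Complex.Gamma (s - 1 / 2)) 0 :=
      ContinuousAt.comp (f := fun s : ℂ => s - 1 / 2) (g := Complex.Gamma)
        hgd.continuousAt (by fun_prop)
    have c3 : ContinuousAt (fun s : ℂ => (Complex.Gamma (s + 1))⁻¹) 0 :=
      ContinuousAt.comp (f := fun s : ℂ => s + 1) (g := fun s => (Complex.Gamma s)⁻¹)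
        Complex.differentiable_one_div_Gamma.continuous.continuousAt (by fun_prop)
    have c4 : ContinuousAt (fun s : ℂ => ((L / π : ℝ) : ℂ) ^ (2 * s - 1)) 0 :=
      ContinuousAt.const_cpow (by fun_prop) (Or.inl hLp)
    exact ((continuousAt_const.mul c1).mul (c2.mul c3)).mul c4
  have hT : Tendsto (fun s : ℂ => F s / s) (nhdsWithin 0 {(0 : ℂ)}ᶜ)
        (nhds ((π ^ 2 / (6 * L) : ℝ) : ℂ)) := by
    have h := hc.tendsto.mono_left (nhdsWithin_le_nhds (s := {(0 : ℂ)}ᶜ))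
    have e1 : (2 * 0 - 1 : ℂ) = -1 := by norm_num
    have e2 : (0 - 1 / 2 : ℂ) = -1 / 2 := by norm_num
    rw [e1, e2, hz, hg, zero_add, Complex.Gamma_one, Complex.cpow_neg_one] at h
    have ev : ((Real.sqrt π : ℝ) : ℂ) * (-1 / 12) * (-2 * ((Real.sqrt π : ℝ) : ℂ) * 1⁻¹) *
        (((L / π : ℝ) : ℂ))⁻¹ = ((π ^ 2 / (6 * L) : ℝ) : ℂ) := by
      have : ((Real.sqrt π : ℝ) : ℂ) * (-1 / 12) * (-2 * ((Real.sqrt π : ℝ) : ℂ) * 1⁻¹)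
          = (π : ℂ) / 6 := by
        rw [← hsq]; ring
      rw [this]
      push_cast
      field_simp
    rw [ev] at h
    refine h.congr' ?_
    filter_upwards [self_mem_nhdsWithin] with s hs
    have hs0 : s ≠ 0 := hs
    rw [hF, Complex.Gamma_add_one s hs0, mul_inv]
    simp only [div_eq_mul_inv]
    ring
  refine ⟨hT, ?_⟩
  rw [hasDerivAt_iff_tendsto_slope]
  refine hT.congr' ?_
  filter_upwards [self_mem_nhdsWithin] with s hs
  have hs0 : s ≠ 0 := hs
  simp [slope_def_field, Function.update_of_ne hs0]
end

section
/- Let L > 0 be real and define F(s) = √π · ζ(2s−1) · (Γ(s − 1/2)/Γ(s)) · (L/π)^{2s−1} for complex s. Then (s + 1/2)·F(s) tends to 0 as s → −1/2 (s ∉ {−1/2}); that is, the simple pole of Γ(s − 1/2) at s = −1/2 is cancelled by the trivial zero ζ(−2) = 0, so F has zero residue at s = −1/2. -/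
open Real Complex Filter

/-- The stripe zeta density `F(s) = √π ζ(2s−1)(Γ(s−1/2)/Γ(s))(L/π)^{2s−1}` has vanishing
residue at `s = −1/2`: `(s+1/2)F(s) → 0` as `s → −1/2`, `s ≠ −1/2`. -/
theorem stripe_zeta_residue_at_minus_half (L : ℝ) (hL : 0 < L) (F : ℂ → ℂ)
    (hF : ∀ s : ℂ, F s = ((Real.sqrt π : ℝ) : ℂ) * riemannZeta (2 * s - 1) *
      (Complex.Gamma (s - 1 / 2) / Complex.Gamma s) *
      ((L / π : ℝ) : ℂ) ^ (2 * s - 1)) :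
    Tendsto (fun s : ℂ => (s + 1 / 2) * F s)
      (nhdsWithin (-(1 / 2)) {(-(1 / 2) : ℂ)}ᶜ) (nhds 0) := by
  have hLπ : ((L / π : ℝ) : ℂ) ≠ 0 := by
    exact_mod_cast (div_pos hL Real.pi_pos).ne'
  have hz0 : riemannZeta (2 * (-(1 / 2) : ℂ) - 1) = 0 := by
    have h := riemannZeta_neg_two_mul_nat_add_one 0
    convert h using 2
    norm_num
  have hz : ContinuousAt (fun s : ℂ => riemannZeta (2 * s - 1)) (-(1 / 2)) := by
    refine ContinuousAt.comp (g := riemannZeta) (f := fun s : ℂ => 2 * s - 1) ?_ (by fun_prop)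
    exact (differentiableAt_riemannZeta (by norm_num)).continuousAt
  have hg : ContinuousAt (fun s : ℂ => Complex.Gamma (s + 3 / 2)) (-(1 / 2)) := by
    refine ContinuousAt.comp (g := Complex.Gamma) (f := fun s : ℂ => s + 3 / 2) ?_ (by fun_prop)
    have h1 : (-(1 / 2) : ℂ) + 3 / 2 = 1 := by norm_num
    simp only [h1]
    refine (Complex.differentiableAt_Gamma _ fun m h => ?_).continuousAt
    have h2 := congrArg Complex.re h
    simp at h2
    have : (0 : ℝ) ≤ m := Nat.cast_nonneg m
    linarith
  have hi : ContinuousAt (fun s : ℂ => (Complex.Gamma s)⁻¹) (-(1 / 2)) :=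
    Complex.differentiable_one_div_Gamma.continuous.continuousAt
  have hd : ContinuousAt (fun s : ℂ => (s - 1 / 2)⁻¹) (-(1 / 2)) := by
    refine ContinuousAt.inv₀ (by fun_prop) (by norm_num)
  have hp : ContinuousAt (fun s : ℂ => ((L / π : ℝ) : ℂ) ^ (2 * s - 1)) (-(1 / 2)) :=
    ContinuousAt.const_cpow (by fun_prop) (Or.inl hLπ)
  have hG := ((((continuousAt_const (y := ((Real.sqrt π : ℝ) : ℂ))).mul hz).mul
    ((hg.mul hd).mul hi)).mul hp).tendsto
  simp only [Pi.mul_apply, hz0, mul_zero, zero_mul] at hG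
  refine (hG.mono_left nhdsWithin_le_nhds).congr' ?_
  have hne : ∀ᶠ s : ℂ in nhdsWithin (-(1 / 2)) {(-(1 / 2) : ℂ)}ᶜ, s ≠ 1 / 2 :=
    nhdsWithin_le_nhds (isOpen_ne.mem_nhds (by norm_num))
  filter_upwards [hne, self_mem_nhdsWithin] with s h1 h2
  have h3 : s - 1 / 2 ≠ 0 := sub_ne_zero.mpr h1
  have h4 : s + 1 / 2 ≠ 0 := fun h => h2 (eq_neg_of_add_eq_zero_left h)
  have e1 := Complex.Gamma_add_one _ h3
  have e2 := Complex.Gamma_add_one _ h4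
  rw [show s - 1 / 2 + 1 = s + 1 / 2 by ring] at e1
  rw [show s + 1 / 2 + 1 = s + 3 / 2 by ring, e1] at e2
  have e3 : Complex.Gamma (s + 3 / 2) * (s - 1 / 2)⁻¹
      = (s + 1 / 2) * Complex.Gamma (s - 1 / 2) := by
    rw [e2, ← div_eq_mul_inv, div_eq_iff h3]
    ring
  simp only [Pi.mul_apply]
  rw [hF, e3]
  ring
end

section
/- Let L > 0 be real and let s > 1 be a real number. Then lim_{R → ∞} (1/R) · ∑_{k ∈ ℤ} ∑_{n=1}^∞ ((k/R)² + (nπ/L)²)^{−s} = ∑_{n=1}^∞ ∫_{−∞}^∞ (x² + (nπ/L)²)^{−s} dx, where the limit is over positive reals R → ∞. -/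
open Real Filter

lemma czd_unit (g : ℝ → ℝ) (heven : ∀ x, g (-x) = g x) (hnn : ∀ x, 0 ≤ g x)
    (hanti : AntitoneOn g (Set.Ici 0)) (hint : MeasureTheory.Integrable g) :
    |∑' k : ℤ, g k - ∫ x, g x| ≤ g 0 := by
  have habs : ∀ x, g |x| = g x := by
    intro x
    rcases abs_choice x with h | h <;> rw [h]
    exact heven x
  have hI : ∫ x, g x = 2 * ∫ x in Set.Ioi 0, g x := by
    rw [← integral_comp_abs]
    simp only [habs]
  set I := ∫ x in Set.Ioi 0, g x with hIdef
  have hanti' : ∀ a : ℕ, AntitoneOn g (Set.Icc (0 : ℝ) (0 + (a : ℝ))) := fun a =>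
    hanti.mono Set.Icc_subset_Ici_self
  have hle : ∀ a : ℕ, ∫ x in (0 : ℝ)..(a : ℝ), g x ≤ I := by
    intro a
    rw [intervalIntegral.integral_of_le (Nat.cast_nonneg a)]
    exact MeasureTheory.setIntegral_mono_set hint.integrableOn
      (Eventually.of_forall fun x => hnn x) (Set.Ioc_subset_Ioi_self.eventuallyLE)
  have hbd : ∀ a : ℕ, ∑ i ∈ Finset.range a, g ((i + 1 : ℕ) : ℝ) ≤ I := by
    intro a
    have := (hanti' a).sum_le_integral
    simp only [zero_add] at this
    exact this.trans (hle a)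
  have hs1 : Summable (fun i : ℕ => g ((i + 1 : ℕ) : ℝ)) :=
    summable_of_sum_range_le (fun _ => hnn _) hbd
  have hA := Real.tsum_le_of_sum_range_le (fun _ => hnn _) hbd
  have hs0 : Summable (fun i : ℕ => g (i : ℝ)) :=
    (summable_nat_add_iff (f := fun i : ℕ => g (i : ℝ)) 1).1 hs1
  have h0 := hs0.tsum_eq_zero_add
  have hB : I ≤ ∑' i : ℕ, g (i : ℝ) := by
    have ht := MeasureTheory.intervalIntegral_tendsto_integral_Ioi (0 : ℝ)
      (hint.integrableOn (s := Set.Ioi 0)) (tendsto_natCast_atTop_atTop (R := ℝ))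
    refine le_of_tendsto' ht fun a => ?_
    have := (hanti' a).integral_le_sum
    simp only [zero_add] at this
    exact this.trans (hs0.sum_le_tsum _ (fun _ _ => hnn _))
  have hneg : ∀ n : ℕ, g (((-((n : ℤ) + 1) : ℤ)) : ℝ) = g ((n + 1 : ℕ) : ℝ) := by
    intro n
    rw [← heven]
    push_cast
    ring_nf
  have hZ := tsum_of_nat_of_neg_add_one (f := fun k : ℤ => g (k : ℝ))
    (by simpa using hs0) (by simpa only [hneg] using hs1)
  simp only [hneg, Int.cast_natCast] at hZ
  rw [hZ, hI, abs_le]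
  simp only [Nat.cast_zero] at h0
  constructor <;> linarith

lemma czd_riemann (F : ℝ → ℝ) (heven : ∀ x, F (-x) = F x) (hnn : ∀ x, 0 ≤ F x)
    (hanti : AntitoneOn F (Set.Ici 0)) (hint : MeasureTheory.Integrable F) :
    Tendsto (fun R : ℝ => (1 / R) * ∑' k : ℤ, F ((k : ℝ) / R)) atTop (nhds (∫ x, F x)) := by
  have h0 : Tendsto (fun R : ℝ => F 0 / R) atTop (nhds 0) :=
    tendsto_const_nhds.div_atTop tendsto_id
  rw [tendsto_iff_dist_tendsto_zero]
  refine squeeze_zero' (Eventually.of_forall fun _ => dist_nonneg) ?_ h0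
  filter_upwards [eventually_gt_atTop 0] with R hR
  have := czd_unit (fun x => F (x / R)) (fun x => by rw [neg_div, heven]) (fun x => hnn _)
    (fun x hx y hy hxy => hanti (div_nonneg hx hR.le) (div_nonneg hy hR.le) (by gcongr))
    (hint.comp_div hR.ne')
  rw [MeasureTheory.Measure.integral_comp_div, abs_of_pos hR, smul_eq_mul, zero_div] at this
  have key : (1 / R) * ∑' k : ℤ, F ((k : ℝ) / R) - ∫ x, F x
      = (∑' k : ℤ, F ((k : ℝ) / R) - R * ∫ x, F x) / R := by
    rw [sub_div, mul_div_cancel_left₀ _ hR.ne', one_div_mul_eq_div]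
  rw [Real.dist_eq, key, abs_div, abs_of_pos hR]
  exact div_le_div_of_nonneg_right this hR.le

lemma czd_int_one (s : ℝ) (hs : 1 < s) :
    MeasureTheory.Integrable (fun x : ℝ => (x ^ 2 + 1) ^ (-s)) := by
  have := integrable_rpow_neg_one_add_norm_sq (E := ℝ) (μ := MeasureTheory.volume) (r := 2 * s)
    (by simp; linarith)
  convert this using 2 with x
  rw [Real.norm_eq_abs, sq_abs, add_comm]
  congr 1
  ring

lemma czd_int_pos (s : ℝ) (hs : 1 < s) : 0 < ∫ x : ℝ, (x ^ 2 + 1) ^ (-s) := by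
  have hp : ∀ x : ℝ, 0 < (x ^ 2 + 1) ^ (-s) := fun x => by positivity
  rw [MeasureTheory.integral_pos_iff_support_of_nonneg (fun x => (hp x).le) (czd_int_one s hs)]
  have : Function.support (fun x : ℝ => (x ^ 2 + 1) ^ (-s)) = Set.univ := by
    ext x
    simp [(hp x).ne']
  rw [this]
  simp

lemma czd_scale (s a : ℝ) (ha : 0 < a) (x : ℝ) :
    (x ^ 2 + a ^ 2) ^ (-s) = a ^ (-(2 * s)) * ((x / a) ^ 2 + 1) ^ (-s) := by
  have : x ^ 2 + a ^ 2 = a ^ 2 * ((x / a) ^ 2 + 1) := by field_simp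
  rw [this, Real.mul_rpow (by positivity) (by positivity)]
  congr 1
  rw [← Real.rpow_natCast, ← Real.rpow_mul ha.le]
  congr 1
  push_cast
  ring

lemma czd_int (s a : ℝ) (hs : 1 < s) (ha : 0 < a) :
    MeasureTheory.Integrable (fun x : ℝ => (x ^ 2 + a ^ 2) ^ (-s)) := by
  simp only [czd_scale s a ha]
  exact ((czd_int_one s hs).comp_div ha.ne').const_mul _

lemma czd_integral (s a : ℝ) (ha : 0 < a) :
    ∫ x : ℝ, (x ^ 2 + a ^ 2) ^ (-s) = a ^ (1 - 2 * s) * ∫ x : ℝ, (x ^ 2 + 1) ^ (-s) := by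
  simp only [czd_scale s a ha]
  rw [MeasureTheory.integral_const_mul,
    MeasureTheory.Measure.integral_comp_div (fun x : ℝ => (x ^ 2 + 1) ^ (-s)), abs_of_pos ha,
    smul_eq_mul, ← mul_assoc, sub_eq_add_neg, Real.rpow_add ha, Real.rpow_one, mul_comm a]

lemma czd_summable (L : ℝ) (hL : 0 < L) (p : ℝ) (hp : p < -1) :
    Summable (fun n : ℕ => (((n : ℝ) + 1) * π / L) ^ p) := by
  have h := (summable_nat_add_iff 1).2 (Real.summable_nat_rpow.2 hp)
  refine (h.mul_right ((π / L) ^ p)).congr fun n => ?_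
  rw [← Real.mul_rpow (by positivity) (by positivity)]
  push_cast
  congr 1
  ring

/-- The zeta function density of the flat cylinder: for real `s > 1`,
`(1/R)∑_{k∈ℤ}∑_{n≥1} ((k/R)² + (nπ/L)²)^{−s}` tends, as `R → ∞`, to
`∑_{n≥1} ∫_ℝ (x² + (nπ/L)²)^{−s} dx`. -/
theorem cylinder_zeta_density_limit (L : ℝ) (hL : 0 < L) (s : ℝ) (hs : 1 < s) :
    Tendsto (fun R : ℝ => (1 / R) *
        ∑' (k : ℤ) (n : ℕ),
          (((k : ℝ) / R) ^ 2 + (((n : ℝ) + 1) * π / L) ^ 2) ^ (-s))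
      atTop
      (nhds (∑' n : ℕ,
        ∫ x : ℝ, (x ^ 2 + (((n : ℝ) + 1) * π / L) ^ 2) ^ (-s))) := by
  have ha : ∀ n : ℕ, 0 < ((n : ℝ) + 1) * π / L := fun n => by positivity
  have hpos : ∀ (n : ℕ) (x : ℝ), 0 < (x ^ 2 + (((n : ℝ) + 1) * π / L) ^ 2) ^ (-s) := by
    intro n x
    have := ha n
    positivity
  have hsI : Summable (fun n : ℕ => ∫ x : ℝ, (x ^ 2 + (((n : ℝ) + 1) * π / L) ^ 2) ^ (-s)) := by
    simp only [fun n => czd_integral s _ (ha n)]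
    exact (czd_summable L hL _ (by linarith)).mul_right _
  have hsI' : Summable
      (fun n : ℕ => ∫ x : ℝ, ‖(x ^ 2 + (((n : ℝ) + 1) * π / L) ^ 2) ^ (-s)‖) := by
    simpa only [Real.norm_eq_abs, abs_of_pos (hpos _ _)] using hsI
  have hH := MeasureTheory.hasSum_integral_of_summable_integral_norm
    (fun n : ℕ => czd_int s _ hs (ha n)) hsI'
  have hsP : ∀ x : ℝ,
      Summable (fun n : ℕ => (x ^ 2 + (((n : ℝ) + 1) * π / L) ^ 2) ^ (-s)) := by
    intro x
    refine Summable.of_nonneg_of_le (fun n => (hpos n x).le) (fun n => ?_)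
      (czd_summable L hL (-(2 * s)) (by linarith))
    rw [czd_scale s _ (ha n)]
    refine mul_le_of_le_one_right (Real.rpow_nonneg (ha n).le _) ?_
    exact Real.rpow_le_one_of_one_le_of_nonpos (by nlinarith [sq_nonneg (x / (((n : ℝ) + 1) * π / L))])
      (by linarith)
  rw [hH.tsum_eq]
  refine czd_riemann (fun x => ∑' n : ℕ, (x ^ 2 + (((n : ℝ) + 1) * π / L) ^ 2) ^ (-s))
    (fun x => by simp only [neg_sq]) (fun x => tsum_nonneg fun n => (hpos n x).le) ?_ ?_
  · intro x hx y hy hxy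
    refine (hsP y).tsum_le_tsum (fun n => ?_) (hsP x)
    have := ha n
    have hx' : (0 : ℝ) ≤ x := hx
    exact Real.rpow_le_rpow_of_nonpos (by positivity) (by gcongr) (by linarith)
  · apply MeasureTheory.Integrable.of_integral_ne_zero
    rw [← hH.tsum_eq]
    refine (hsI.tsum_pos (fun n => ?_) 0 ?_).ne'
    · exact MeasureTheory.integral_nonneg fun x => (hpos n x).le
    · rw [czd_integral s _ (ha 0)]
      exact mul_pos (Real.rpow_pos_of_pos (ha 0) _) (czd_int_pos s hs)
end
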